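/- For the family 𝔤₄(λ, z₂, w₁, w₂) with λ ≠ 0, the structure J is never Kähler: it is impossible that simultaneously dω(E,F,G) = 0 for all E, F, G ∈ 𝔤 and N(E,F) = 0 for all E, F ∈ 𝔤. -/

import Mathlib

/-!
`dω` and `N` each have only one independent value. Up to order, the only basis triple on which
`dω` can be nonzero is `(X, Y, Z)`, where it equals `z₂ w₁ / λ - 2 λ`. Since `N` is alternating and
satisfies `N(JE, F) = -J N(E, F)`, it is determined on a real 4-dimensional space by
`N(X, Z) = w₂ Z - (w₁ + 2 z₂) W`. If both vanish, then `w₁ = -2 z₂` and hence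
`z₂ ^ 2 + λ ^ 2 = 0`, which forces `λ = 0`.
-/

noncomputable section

/-- The bilinear antisymmetric bracket on ℝ⁴ determined by the structure constants. -/
def bk (lam z₂ w₁ w₂ : ℝ) (E F : Fin 4 → ℝ) : Fin 4 → ℝ :=
  (E 0 * F 1 - E 1 * F 0) • (![z₂, 0, 0, z₂ * w₁ / lam] : Fin 4 → ℝ) +
  (E 0 * F 2 - E 2 * F 0) • (![-lam, 0, 0, -w₁] : Fin 4 → ℝ) +
  (E 0 * F 3 - E 3 * F 0) • (![0, 0, 0, 0] : Fin 4 → ℝ) +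
  (E 1 * F 2 - E 2 * F 1) • (![0, -lam, -z₂, -w₂] : Fin 4 → ℝ) +
  (E 1 * F 3 - E 3 * F 1) • (![0, 0, 0, z₂] : Fin 4 → ℝ) +
  (E 2 * F 3 - E 3 * F 2) • (![0, 0, 0, -lam] : Fin 4 → ℝ)

/-- The almost Hermitian structure J with J(X)=Y, J(Y)=-X, J(Z)=W, J(W)=-Z. -/
def Jm (E : Fin 4 → ℝ) : Fin 4 → ℝ := ![-E 1, E 0, -E 3, E 2]

/-- The standard inner product, making {X,Y,Z,W} orthonormal. -/
def ip (E F : Fin 4 → ℝ) : ℝ := E 0 * F 0 + E 1 * F 1 + E 2 * F 2 + E 3 * F 3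

/-- The Kähler form ω(E,F) = ⟨JE, F⟩. -/
def om (E F : Fin 4 → ℝ) : ℝ := ip (Jm E) F

/-- The left-invariant exterior derivative of the Kähler form. -/
def dom (lam z₂ w₁ w₂ : ℝ) (E F G : Fin 4 → ℝ) : ℝ :=
  -om (bk lam z₂ w₁ w₂ E F) G - om (bk lam z₂ w₁ w₂ F G) E - om (bk lam z₂ w₁ w₂ G E) F

/-- The Nijenhuis tensor of J. -/
def NT (lam z₂ w₁ w₂ : ℝ) (E F : Fin 4 → ℝ) : Fin 4 → ℝ :=
  bk lam z₂ w₁ w₂ E F + Jm (bk lam z₂ w₁ w₂ (Jm E) F) + Jm (bk lam z₂ w₁ w₂ E (Jm F)) -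
    bk lam z₂ w₁ w₂ (Jm E) (Jm F)

section

variable (lam z₂ w₁ w₂ : ℝ)

lemma dom_eq_mul_det (E F G : Fin 4 → ℝ) :
    dom lam z₂ w₁ w₂ E F G = (z₂ * w₁ / lam - 2 * lam) *
      Matrix.det !![E 0, E 1, E 2; F 0, F 1, F 2; G 0, G 1, G 2] := by
  simp only [dom, om, ip, Jm, bk, Matrix.det_fin_three, Matrix.smul_cons, Matrix.smul_empty,
    Matrix.add_cons, Matrix.empty_add_empty, Matrix.head_cons, Matrix.tail_cons, Matrix.of_apply,
    Matrix.cons_val]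
  ring

-- In the complex coordinates `E 0 + i E 1`, `E 2 + i E 3` the scalars are the real and imaginary
-- parts of the complex determinant of `(E, F)`: `N` is its conjugate times `N(X, Z)`.
lemma NT_eq_smul_sub_smul (E F : Fin 4 → ℝ) :
    NT lam z₂ w₁ w₂ E F =
      (E 0 * F 2 - E 2 * F 0 - (E 1 * F 3 - E 3 * F 1)) • ![0, 0, w₂, -(w₁ + 2 * z₂)] -
      (E 0 * F 3 - E 3 * F 0 + (E 1 * F 2 - E 2 * F 1)) • Jm ![0, 0, w₂, -(w₁ + 2 * z₂)] := by
  ext i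
  fin_cases i <;> simp [NT, Jm, bk] <;> ring

variable {lam z₂ w₁ w₂}

lemma forall_dom_eq_zero_iff (hlam : lam ≠ 0) :
    (∀ E F G : Fin 4 → ℝ, dom lam z₂ w₁ w₂ E F G = 0) ↔ z₂ * w₁ = 2 * lam ^ 2 := by
  have hcoeff : z₂ * w₁ / lam - 2 * lam = 0 ↔ z₂ * w₁ = 2 * lam ^ 2 := by
    rw [sub_eq_zero, div_eq_iff hlam, mul_assoc, ← sq]
  simp only [dom_eq_mul_det, ← hcoeff]
  refine ⟨fun h ↦ ?_, fun h E F G ↦ by rw [h, zero_mul]⟩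
  simpa [Matrix.det_fin_three] using h ![1, 0, 0, 0] ![0, 1, 0, 0] ![0, 0, 1, 0]

lemma forall_NT_eq_zero_iff :
    (∀ E F : Fin 4 → ℝ, NT lam z₂ w₁ w₂ E F = 0) ↔ w₁ = -2 * z₂ ∧ w₂ = 0 := by
  constructor
  · intro h
    have hXZ : ![0, 0, w₂, -(w₁ + 2 * z₂)] = 0 := by
      simpa [NT_eq_smul_sub_smul] using h ![1, 0, 0, 0] ![0, 0, 1, 0]
    have hZ : w₂ = 0 := congrFun hXZ 2
    have hW : -(w₁ + 2 * z₂) = 0 := congrFun hXZ 3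
    exact ⟨by linarith, hZ⟩
  · rintro ⟨rfl, rfl⟩ E F
    simp [NT_eq_smul_sub_smul, Jm]

end

theorem g4_never_kaehler (lam z₂ w₁ w₂ : ℝ) (hlam : lam ≠ 0) :
    ¬ ((∀ E F G : Fin 4 → ℝ, dom lam z₂ w₁ w₂ E F G = 0) ∧
      (∀ E F : Fin 4 → ℝ, NT lam z₂ w₁ w₂ E F = 0)) := by
  rintro ⟨hω, hN⟩
  have hprod : z₂ * w₁ = 2 * lam ^ 2 := (forall_dom_eq_zero_iff hlam).mp hω
  obtain ⟨rfl, -⟩ := forall_NT_eq_zero_iff.mp hN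
  have hpos : 0 < lam ^ 2 := by positivity
  linarith [sq_nonneg z₂]

end
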